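/- arXiv:2301.03417 — 3 statements merged into one kernel-verified Lean document; each statement's English description precedes it below -/
import Mathlib

section
/- Every digraph D is k-mixing for every integer k ≥ δ*_min(D) + 2, where δ*_min(D) denotes the min-degeneracy of D. -/
/-- A relation (digraph) is acyclic if no vertex lies on a directed cycle. -/
def RelAcyclic {V : Type} (r : V → V → Prop) : Prop :=
  ∀ v, ¬ Relation.TransGen r v v

/-- `α` is a `k`-dicolouring of the digraph `D`: each colour class induces
an acyclic subdigraph. -/
def IsDicolouring {V : Type} (D : V → V → Prop) (k : ℕ) (α : V → Fin k) : Prop :=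
  ∀ c : Fin k, RelAcyclic (fun u v => D u v ∧ α u = c ∧ α v = c)

/-- Two colourings differ on exactly one vertex. -/
def RecolAdj {V : Type} {k : ℕ} (α β : V → Fin k) : Prop :=
  ∃ v, α v ≠ β v ∧ ∀ w, w ≠ v → α w = β w

/-- A single edge of the `k`-dicolouring graph `D_k(D)`. -/
def RecolStep {V : Type} (D : V → V → Prop) (k : ℕ) (α β : V → Fin k) : Prop :=
  IsDicolouring D k α ∧ IsDicolouring D k β ∧ RecolAdj α β

/-- The digraph `D` is `k`-mixing: the `k`-dicolouring graph is connected. -/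
def Mixing {V : Type} (D : V → V → Prop) (k : ℕ) : Prop :=
  ∀ α β : V → Fin k, IsDicolouring D k α → IsDicolouring D k β →
    Relation.ReflTransGen (RecolStep D k) α β

/-- Out-degree of `v` in the subdigraph of `D` induced by `S`. -/
noncomputable def outDegOn {V : Type} (D : V → V → Prop) (S : Set V) (v : V) : ℕ :=
  {w ∈ S | D v w}.ncard

/-- In-degree of `v` in the subdigraph of `D` induced by `S`. -/
noncomputable def inDegOn {V : Type} (D : V → V → Prop) (S : Set V) (v : V) : ℕ :=
  {w ∈ S | D w v}.ncard

/-- An oriented graph: a digraph with no digon (hence also no loop). -/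
def Oriented {V : Type} (D : V → V → Prop) : Prop :=
  ∀ u v, D u v → ¬ D v u

/-- A walk of length `m` in the `k`-dicolouring graph (a redicolouring sequence):
consecutive dicolourings differ on exactly one vertex. -/
def RecolWalk {V : Type} (D : V → V → Prop) (k m : ℕ) (γ : ℕ → V → Fin k) : Prop :=
  (∀ i ≤ m, IsDicolouring D k (γ i)) ∧ ∀ i < m, RecolAdj (γ i) (γ (i + 1))

/-- A frozen `k`-dicolouring: no single vertex can be recoloured so as to
yield another `k`-dicolouring. -/
def FrozenDicolouring {V : Type} [DecidableEq V] (D : V → V → Prop) (k : ℕ)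
    (α : V → Fin k) : Prop :=
  IsDicolouring D k α ∧
    ∀ (v : V) (c : Fin k), c ≠ α v → ¬ IsDicolouring D k (Function.update α v c)

/-- The arc set of a digraph, as a set of ordered pairs. -/
def arcSet {V : Type} (D : V → V → Prop) : Set (V × V) := {p | D p.1 p.2}

/-- The arcs of `D` lying inside a set `S` of vertices. -/
def arcSetOn {V : Type} (D : V → V → Prop) (S : Set V) : Set (V × V) :=
  {p | p.1 ∈ S ∧ p.2 ∈ S ∧ D p.1 p.2}

/-!
Induct on the number of vertices, deleting a vertex `v` whose out-degree or in-degree is at most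
`k - 2`; reversing all arcs, assume it is the out-degree. A redicolouring sequence of `D - v` lifts
to `D`: before a vertex `u` is recoloured, move `v` to a colour that is neither the new colour of
`u` nor the colour of an out-neighbour of `v`. At most `k - 1` colours are excluded, and `v` then
has no out-neighbour of its own colour, hence lies on no monochromatic cycle before or after the
recolouring of `u`. Once `D - v` has reached its target, `v` receives its target colour.
-/

/-- `δ*_min(D) ≤ d`. Subdigraphs are encoded by their vertex sets: among the subdigraphs on a given
vertex set, the induced one has the largest degrees. -/
def MinDegenerate {V : Type} (D : V → V → Prop) (d : ℕ) : Prop :=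
  ∀ S : Set V, S.Nonempty → ∃ v ∈ S, min (outDegOn D S v) (inDegOn D S v) ≤ d

section

open Function Relation

variable {V W : Type} {D : V → V → Prop} {k : ℕ} {v : V}

theorem outDegOn_preimage {f : W → V} (hf : Injective f) (S : Set W) (w : W) :
    outDegOn (f ⁻¹'o D) S w = outDegOn D (f '' S) (f w) := by
  rw [outDegOn, outDegOn, ← Set.ncard_image_of_injective _ hf]
  congr 1
  ext
  aesop

theorem inDegOn_preimage {f : W → V} (hf : Injective f) (S : Set W) (w : W) :
    inDegOn (f ⁻¹'o D) S w = inDegOn D (f '' S) (f w) :=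
  outDegOn_preimage (D := swap D) hf S w

theorem MinDegenerate.preimage {d : ℕ} (hD : MinDegenerate D d) {f : W → V} (hf : Injective f) :
    MinDegenerate (f ⁻¹'o D) d := by
  intro S hS
  obtain ⟨_, ⟨w, hw, rfl⟩, hdeg⟩ := hD (f '' S) (hS.image f)
  exact ⟨w, hw, by rwa [outDegOn_preimage hf, inDegOn_preimage hf]⟩

theorem relAcyclic_swap {r : V → V → Prop} : RelAcyclic (swap r) ↔ RelAcyclic r :=
  forall_congr' fun _ => not_congr transGen_swap

theorem isDicolouring_swap {α : V → Fin k} :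
    IsDicolouring (swap D) k α ↔ IsDicolouring D k α := by
  refine forall_congr' fun c => ?_
  have : (fun u v => swap D u v ∧ α u = c ∧ α v = c) =
      swap fun u v => D u v ∧ α u = c ∧ α v = c := by
    ext u v
    exact and_congr_right' and_comm
  rw [this, relAcyclic_swap]

theorem mixing_swap : Mixing (swap D) k ↔ Mixing D k := by
  have hstep : RecolStep (swap D) k = RecolStep D k := by
    ext α β
    simp only [RecolStep, isDicolouring_swap]
  simp only [Mixing, isDicolouring_swap, hstep]

theorem RelAcyclic.of_subrel_ne {r : V → V → Prop} (hr : RelAcyclic (Subrel r (· ≠ v)))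
    (hv : ∀ w, ¬ r v w) : RelAcyclic r := by
  have ne_of_rel {x y : V} (hxy : r x y) : x ≠ v := by
    rintro rfl
    exact hv y hxy
  have lift_walk {x y : V} (hx : x ≠ v) (hxy : TransGen r x y) :
      ∀ hy : y ≠ v, TransGen (Subrel r (· ≠ v)) ⟨x, hx⟩ ⟨y, hy⟩ := by
    induction hxy with
    | single hxy => exact fun _ => .single hxy
    | tail _ hyz ih => exact fun _ => .tail (ih (ne_of_rel hyz)) hyz
  intro x hxx
  obtain ⟨y, hxy, -⟩ := TransGen.head'_iff.1 hxx
  have hx : x ≠ v := ne_of_rel hxy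
  exact hr ⟨x, hx⟩ (lift_walk hx hxx hx)

namespace IsDicolouring

variable {α : V → Fin k}

theorem not_rel_self (hα : IsDicolouring D k α) (v : V) : ¬ D v v :=
  fun hv => hα (α v) v (.single ⟨hv, rfl, rfl⟩)

theorem preimage (hα : IsDicolouring D k α) (f : W → V) :
    IsDicolouring (f ⁻¹'o D) k (α ∘ f) :=
  fun c w hw => hα c (f w) (hw.lift f fun _ _ h => h)

theorem of_subrel_ne (hα : IsDicolouring (Subrel D (· ≠ v)) k (α ∘ Subtype.val))
    (hv : ∀ w, D v w → α w ≠ α v) : IsDicolouring D k α :=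
  fun c => RelAcyclic.of_subrel_ne (hα c) fun w ⟨hvw, hvc, hwc⟩ => hv w hvw (hwc.trans hvc.symm)

theorem reflTransGen_recolStep {β : V → Fin k} (hα : IsDicolouring D k α)
    (hβ : IsDicolouring D k β) (hαβ : ∀ w, w ≠ v → α w = β w) :
    ReflTransGen (RecolStep D k) α β := by
  by_cases hv : α v = β v
  · have : α = β := funext fun w => (eq_or_ne w v).elim (fun h => h ▸ hv) (hαβ w)
    exact this ▸ .refl
  · exact .single ⟨hα, hβ, v, hv, hαβ⟩

end IsDicolouring

theorem exists_colour_ne_forall_out_ne [Finite V] (hk : outDegOn D Set.univ v + 2 ≤ k)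
    (α : V → Fin k) (c : Fin k) : ∃ a, a ≠ c ∧ ∀ w, D v w → α w ≠ a := by
  set N : Set V := {w ∈ Set.univ | D v w}
  have hcard : (insert c (α '' N)).ncard < k := by
    calc (insert c (α '' N)).ncard ≤ (α '' N).ncard + 1 := Set.ncard_insert_le _ _
      _ ≤ N.ncard + 1 := by gcongr; exact Set.ncard_image_le
      _ < k := hk
  obtain ⟨a, ha⟩ : ∃ a, a ∉ insert c (α '' N) := by
    refine (Set.ne_univ_iff_exists_notMem _).1 fun h => ?_
    simp [h] at hcard
  exact ⟨a, fun h => ha (.inl h), fun w hw h => ha (.inr ⟨w, ⟨trivial, hw⟩, h⟩)⟩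

section VertexDeletion

variable [Finite V]

theorem RecolStep.exists_lift (hk : outDegOn D Set.univ v + 2 ≤ k) {α : V → Fin k}
    (hα : IsDicolouring D k α) {γ : {w // w ≠ v} → Fin k}
    (h : RecolStep (Subrel D (· ≠ v)) k (α ∘ Subtype.val) γ) :
    ∃ β, IsDicolouring D k β ∧ β ∘ Subtype.val = γ ∧ ReflTransGen (RecolStep D k) α β := by
  classical
  obtain ⟨hα', hγ, u, -, hu⟩ := h
  obtain ⟨a, hac, ha⟩ := exists_colour_ne_forall_out_ne hk α (γ u)
  have ne_of_out {w : V} (hw : D v w) : w ≠ v := by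
    rintro rfl
    exact hα.not_rel_self _ hw
  set α₁ := update α v a with hα₁
  set β := update α₁ u (γ u) with hβ
  have α₁_out {w : V} (hw : D v w) : α₁ w ≠ a := by
    rw [hα₁, update_of_ne (ne_of_out hw)]
    exact ha w hw
  have β_v : β v = a := by rw [hβ, update_of_ne u.2.symm, hα₁, update_self]
  have α₁_dic : IsDicolouring D k α₁ := by
    refine .of_subrel_ne (v := v) ?_ fun w hw => by simpa [hα₁] using α₁_out hw
    rwa [hα₁, update_comp_eq_of_forall_ne _ _ fun w => w.2]
  have β_restrict : β ∘ Subtype.val = γ := by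
    ext w : 1
    rcases eq_or_ne w u with rfl | hwu
    · simp [hβ]
    · simpa [hβ, hα₁, Subtype.coe_ne_coe.2 hwu, w.2] using hu w hwu
  have β_dic : IsDicolouring D k β := by
    refine .of_subrel_ne (v := v) (β_restrict ▸ hγ) fun w hw => β_v ▸ ?_
    rcases eq_or_ne w u with rfl | hwu
    · simpa [hβ] using hac.symm
    · simpa [hβ, hwu] using α₁_out hw
  have α_path : ReflTransGen (RecolStep D k) α α₁ :=
    hα.reflTransGen_recolStep α₁_dic fun w hw => (update_of_ne hw _ _).symm
  have α₁_path : ReflTransGen (RecolStep D k) α₁ β :=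
    α₁_dic.reflTransGen_recolStep β_dic fun w hw => (update_of_ne hw _ _).symm
  exact ⟨β, β_dic, β_restrict, α_path.trans α₁_path⟩

theorem exists_lift_of_reflTransGen (hk : outDegOn D Set.univ v + 2 ≤ k) {α : V → Fin k}
    (hα : IsDicolouring D k α) {γ : {w // w ≠ v} → Fin k}
    (h : ReflTransGen (RecolStep (Subrel D (· ≠ v)) k) (α ∘ Subtype.val) γ) :
    ∃ β, IsDicolouring D k β ∧ β ∘ Subtype.val = γ ∧ ReflTransGen (RecolStep D k) α β := by
  induction h with
  | refl => exact ⟨α, hα, rfl, .refl⟩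
  | tail _ hstep ih =>
    obtain ⟨β, hβ, rfl, hαβ⟩ := ih
    obtain ⟨β', hβ', hγ, hββ'⟩ := hstep.exists_lift hk hβ
    exact ⟨β', hβ', hγ, hαβ.trans hββ'⟩

theorem Mixing.of_subrel_ne_of_outDegOn (h : Mixing (Subrel D (· ≠ v)) k)
    (hk : outDegOn D Set.univ v + 2 ≤ k) : Mixing D k := by
  intro α β hα hβ
  obtain ⟨γ, hγ, hγβ, hαγ⟩ := exists_lift_of_reflTransGen hk hα
    (h _ _ (hα.preimage Subtype.val) (hβ.preimage Subtype.val))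
  exact hαγ.trans (hγ.reflTransGen_recolStep hβ fun w hw => congr_fun hγβ ⟨w, hw⟩)

theorem Mixing.of_subrel_ne (h : Mixing (Subrel D (· ≠ v)) k)
    (hk : min (outDegOn D Set.univ v) (inDegOn D Set.univ v) + 2 ≤ k) : Mixing D k := by
  rcases min_choice (outDegOn D Set.univ v) (inDegOn D Set.univ v) with hout | hin
  · exact h.of_subrel_ne_of_outDegOn (by rwa [hout] at hk)
  · exact mixing_swap.1 ((mixing_swap.2 h).of_subrel_ne_of_outDegOn (by rwa [hin] at hk))

end VertexDeletion

end

/-- Every digraph `D` is `k`-mixing for every `k ≥ δ*_min(D) + 2`, where the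
min-degeneracy `δ*_min(D)` is the least `d` such that every nonempty subdigraph
has a vertex `v` with `min (d⁺ v) (d⁻ v) ≤ d`. -/
theorem min_degeneracy_mixing {V : Type} [Fintype V] (D : V → V → Prop)
    (hloopless : Irreflexive D) (d k : ℕ)
    (hd : ∀ S : Set V, S.Nonempty → ∃ v ∈ S, min (outDegOn D S v) (inDegOn D S v) ≤ d)
    (hk : d + 2 ≤ k) :
    Mixing D k := by
  classical
  induction hn : Fintype.card V generalizing V with
  | zero =>
    have : IsEmpty V := Fintype.card_eq_zero_iff.1 hn
    exact fun α β _ _ => Subsingleton.elim α β ▸ .refl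
  | succ n ih =>
    have : Nonempty V := Fintype.card_pos_iff.1 (by lia)
    obtain ⟨v, -, hv⟩ := hd Set.univ Set.univ_nonempty
    have hd' : MinDegenerate (Subrel D (· ≠ v)) d :=
      MinDegenerate.preimage hd Subtype.val_injective
    have hn' : Fintype.card {w // w ≠ v} = n := by simp [Fintype.card_subtype_compl, hn]
    have hmix : Mixing (Subrel D (· ≠ v)) k := ih _ (fun w => hloopless w) hd' hn'
    exact hmix.of_subrel_ne (by lia)
end

section
/- Every oriented graph G⃗ is k-mixing for every integer k ≥ ⌈δ*_avg(G⃗)⌉ + 1, where δ*_avg denotes the average-degeneracy. -/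
/-!
Induct on the vertex set, deleting a vertex `v` of small degree and lifting a redicolouring sequence
of the rest back to the whole digraph. Such a sequence can be followed verbatim until recolouring
some `u` would close a monochromatic cycle through `v`; then `v` must first move to another colour,
which is possible if some other colour is missing among its in-neighbours or among its
out-neighbours. The total degree of `v` is at most `2 (k - 1)`, so otherwise every colour other than
that of `v` occurs exactly once on each side. But the cycle needs an in-neighbour and an
out-neighbour of `v` both coloured like `v`. Without a digon only one of them is `u`, so the other
one already had the colour of `v`: its side sees all `k` colours on only `k - 1` vertices.
-/

open Relation Set

section Acyclic

variable {V : Type} {r s : V → V → Prop}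

theorem RelAcyclic.mono (hrs : ∀ a b, r a b → s a b) (hs : RelAcyclic s) : RelAcyclic r :=
  fun v hv => hs v (TransGen.mono hrs _ _ hv)

theorem transGen_avoiding_or_through (v : V) {x y : V} (h : TransGen r x y) :
    TransGen (fun a b => r a b ∧ a ≠ v ∧ b ≠ v) x y ∨
      ReflTransGen r x v ∧ ReflTransGen r v y := by
  induction h with
  | @single b hxb =>
    by_cases hx : x = v
    · exact .inr (hx ▸ ⟨.refl, .single hxb⟩)
    by_cases hb : b = v
    · exact .inr (hb ▸ ⟨.single hxb, .refl⟩)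
    exact .inl (.single ⟨hxb, hx, hb⟩)
  | @tail b c hxb hbc ih =>
    by_cases hb : b = v
    · exact .inr (hb ▸ ⟨hxb.to_reflTransGen, .single hbc⟩)
    by_cases hc : c = v
    · exact .inr (hc ▸ ⟨hxb.to_reflTransGen.tail hbc, .refl⟩)
    exact ih.imp (fun h => h.tail ⟨hbc, hb, hc⟩) (fun h => ⟨h.1, h.2.tail hbc⟩)

theorem RelAcyclic.of_avoiding {v : V} (h : RelAcyclic fun a b => r a b ∧ a ≠ v ∧ b ≠ v)
    (hv : ¬ TransGen r v v) : RelAcyclic r := by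
  intro x hx
  rcases transGen_avoiding_or_through v hx with havoid | ⟨hxv, hvx⟩
  · exact h x havoid
  · exact hv ((hx.trans_right hvx).trans_left hxv)

end Acyclic

/-- The subdigraph of `D` induced by `S`, encoded on the whole vertex type: the vertices outside `S`
become isolated, so a colouring may take any values there. -/
def inducedOn {V : Type} (D : V → V → Prop) (S : Set V) : V → V → Prop :=
  fun a b => D a b ∧ a ∈ S ∧ b ∈ S

/-- Colour `c` is free at `v` in the subdigraph induced by `S`: it is missing among the
in-neighbours of `v` or among its out-neighbours. Giving `v` a free colour cannot close a
monochromatic cycle. -/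
def IsFreeColour {V : Type} {k : ℕ} (D : V → V → Prop) (S : Set V) (v : V) (γ : V → Fin k)
    (c : Fin k) : Prop :=
  (∀ w ∈ S, D w v → γ w ≠ c) ∨ (∀ w ∈ S, D v w → γ w ≠ c)

/-- The degree condition under which redicolouring sequences of the subdigraph induced by `S \ {v}`
lift to the one induced by `S`. The second alternative, one colour better, only works when `v` lies
on no digon. -/
def IsPeelable {V : Type} (D : V → V → Prop) (S : Set V) (k : ℕ) (v : V) : Prop :=
  min (outDegOn D S v) (inDegOn D S v) + 1 < k ∨
    max (outDegOn D S v) (inDegOn D S v) < k ∧ ∀ w ∈ S, D v w → ¬ D w v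

section Dicolouring

variable {V : Type} {D : V → V → Prop} {S T : Set V} {k : ℕ} {v : V} {γ δ : V → Fin k}
  {c : Fin k}

theorem inducedOn_univ : inducedOn D univ = D := by
  funext a b
  simp [inducedOn]

theorem IsDicolouring.irrefl (h : IsDicolouring D k γ) (v : V) : ¬ D v v :=
  fun hv => h (γ v) v (.single ⟨hv, rfl, rfl⟩)

theorem IsDicolouring.inducedOn_anti (hTS : T ⊆ S) (h : IsDicolouring (inducedOn D S) k γ) :
    IsDicolouring (inducedOn D T) k γ :=
  fun c => (h c).mono fun _ _ ⟨⟨hab, ha, hb⟩, hγ⟩ => ⟨⟨hab, hTS ha, hTS hb⟩, hγ⟩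

theorem IsDicolouring.congr_on (h : IsDicolouring (inducedOn D S) k γ) (hγδ : EqOn γ δ S) :
    IsDicolouring (inducedOn D S) k δ :=
  fun c => (h c).mono fun _ _ ⟨hab, ha, hb⟩ =>
    ⟨hab, (hγδ hab.2.1).trans ha, (hγδ hab.2.2).trans hb⟩

theorem IsDicolouring.of_sdiff_singleton (h : IsDicolouring (inducedOn D (S \ {v})) k γ)
    (hv : ¬ TransGen (fun a b => inducedOn D S a b ∧ γ a = γ v ∧ γ b = γ v) v v) :
    IsDicolouring (inducedOn D S) k γ := by
  intro c
  refine RelAcyclic.of_avoiding (v := v) ((h c).mono ?_) fun hcycle => ?_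
  · rintro a b ⟨⟨⟨hab, ha, hb⟩, hγ⟩, hav, hbv⟩
    exact ⟨⟨hab, ⟨ha, hav⟩, ⟨hb, hbv⟩⟩, hγ⟩
  · obtain ⟨_, ⟨_, rfl, _⟩, _⟩ := TransGen.head'_iff.1 hcycle
    exact hv hcycle

theorem IsDicolouring.of_isFreeColour (h : IsDicolouring (inducedOn D (S \ {v})) k γ)
    (hfree : IsFreeColour D S v γ (γ v)) : IsDicolouring (inducedOn D S) k γ := by
  refine h.of_sdiff_singleton fun hcycle => ?_
  rcases hfree with hin | hout
  · obtain ⟨p, _, ⟨hpv, hp, _⟩, hγp, _⟩ := TransGen.tail'_iff.1 hcycle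
    exact hin p hp hpv hγp
  · obtain ⟨q, ⟨⟨hvq, _, hq⟩, _, hγq⟩, _⟩ := TransGen.head'_iff.1 hcycle
    exact hout q hq hvq hγq

theorem IsDicolouring.of_colourClass_subset (hδ : IsDicolouring (inducedOn D (S \ {v})) k δ)
    (hγ : IsDicolouring (inducedOn D S) k γ) (hsub : ∀ w, δ w = δ v → γ w = γ v) :
    IsDicolouring (inducedOn D S) k δ :=
  hδ.of_sdiff_singleton fun hcycle => hγ (γ v) v <|
    hcycle.mono (fun _ _ ⟨hab, ha, hb⟩ => ⟨hab, hsub _ ha, hsub _ hb⟩) _ _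

theorem IsFreeColour.mono (hloop : ¬ D v v) (hsub : ∀ w, w ≠ v → δ w = c → γ w = c)
    (h : IsFreeColour D S v γ c) : IsFreeColour D S v δ c := by
  refine h.imp (fun hin w hw hwv hδ => hin w hw hwv (hsub w ?_ hδ))
    (fun hout w hw hvw hδ => hout w hw hvw (hsub w ?_ hδ))
  · rintro rfl
    exact hloop hwv
  · rintro rfl
    exact hloop hvw

theorem IsDicolouring.update_of_isFreeColour [DecidableEq V]
    (h : IsDicolouring (inducedOn D (S \ {v})) k γ) (hloop : ¬ D v v)
    (hfree : IsFreeColour D S v γ c) :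
    IsDicolouring (inducedOn D S) k (Function.update γ v c) := by
  have hcongr : EqOn γ (Function.update γ v c) (S \ {v}) :=
    fun w hw => (Function.update_of_ne hw.2 c γ).symm
  refine (h.congr_on hcongr).of_isFreeColour ?_
  rw [Function.update_self]
  refine hfree.mono hloop fun w hw hwc => ?_
  rwa [Function.update_of_ne hw] at hwc

end Dicolouring

section FreeColour

variable {V : Type} {D : V → V → Prop} {S N : Set V} {k : ℕ} {u v : V} {γ δ : V → Fin k}
  {a : Fin k}

theorem exists_ne_forall_ne_of_ncard_insert_lt (h : (insert a (γ '' N)).ncard < k) :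
    ∃ c ≠ a, ∀ w ∈ N, γ w ≠ c := by
  obtain ⟨c, _, hc⟩ := exists_mem_notMem_of_ncard_lt_ncard (t := (univ : Set (Fin k)))
    (h.trans_eq (by simp))
  exact ⟨c, fun hca => hc (.inl hca), fun w hw hwc => hc (.inr ⟨w, hw, hwc⟩)⟩

theorem exists_ne_forall_ne_of_ncard_add_one_lt (hN : N.Finite) (h : N.ncard + 1 < k) :
    ∃ c ≠ a, ∀ w ∈ N, γ w ≠ c :=
  exists_ne_forall_ne_of_ncard_insert_lt <|
    (ncard_insert_le a (γ '' N)).trans_lt <|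
      (Nat.add_le_add_right (ncard_image_le hN) 1).trans_lt h

theorem exists_ne_forall_ne_of_ncard_lt (hN : N.Finite) (h : N.ncard < k) (ha : a ∈ γ '' N) :
    ∃ c ≠ a, ∀ w ∈ N, γ w ≠ c :=
  exists_ne_forall_ne_of_ncard_insert_lt <| by
    rw [insert_eq_of_mem ha]
    exact (ncard_image_le hN).trans_lt h

theorem exists_isFreeColour_ne (hS : S.Finite) (hv : IsPeelable D S k v)
    (hγδ : EqOn γ δ {u}ᶜ) (ha : ¬ IsFreeColour D S v δ a) :
    ∃ c ≠ a, IsFreeColour D S v γ c := by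
  have hout : {w ∈ S | D v w}.Finite := hS.sep _
  have hin : {w ∈ S | D w v}.Finite := hS.sep _
  rcases hv with hmin | ⟨hmax, hdigon⟩
  · obtain hlt | hlt : outDegOn D S v + 1 < k ∨ inDegOn D S v + 1 < k := by omega
    · obtain ⟨c, hca, hc⟩ := exists_ne_forall_ne_of_ncard_add_one_lt (γ := γ) (a := a) hout hlt
      exact ⟨c, hca, .inr fun w hw hvw => hc w ⟨hw, hvw⟩⟩
    · obtain ⟨c, hca, hc⟩ := exists_ne_forall_ne_of_ncard_add_one_lt (γ := γ) (a := a) hin hlt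
      exact ⟨c, hca, .inl fun w hw hwv => hc w ⟨hw, hwv⟩⟩
  · obtain ⟨hmax_out, hmax_in⟩ := max_lt_iff.1 hmax
    rw [IsFreeColour] at ha
    push Not at ha
    obtain ⟨⟨p, hp, hpv, hδp⟩, q, hq, hvq, hδq⟩ := ha
    by_cases hqu : q = u
    · have hpu : p ≠ u := fun hpu => hdigon q hq hvq (hqu ▸ hpu ▸ hpv)
      obtain ⟨c, hca, hc⟩ :=
        exists_ne_forall_ne_of_ncard_lt hin hmax_in ⟨p, ⟨hp, hpv⟩, (hγδ hpu).trans hδp⟩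
      exact ⟨c, hca, .inl fun w hw hwv => hc w ⟨hw, hwv⟩⟩
    · obtain ⟨c, hca, hc⟩ :=
        exists_ne_forall_ne_of_ncard_lt hout hmax_out ⟨q, ⟨hq, hvq⟩, (hγδ hqu).trans hδq⟩
      exact ⟨c, hca, .inr fun w hw hvw => hc w ⟨hw, hvw⟩⟩

theorem Oriented.isPeelable (hD : Oriented D)
    (hdeg : outDegOn D S v + inDegOn D S v + 2 ≤ 2 * k) : IsPeelable D S k v := by
  by_cases hmin : min (outDegOn D S v) (inDegOn D S v) + 1 < k
  · exact .inl hmin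
  · exact .inr ⟨by omega, fun w _ => hD v w⟩

end FreeColour

section Lifting

variable {V : Type} {D : V → V → Prop} {S : Set V} {k : ℕ} {u v : V} {α β γ δ : V → Fin k}

theorem reflTransGen_recolStep_of_eqOn (hα : IsDicolouring D k α) (hβ : IsDicolouring D k β)
    (hαβ : EqOn α β {v}ᶜ) : ReflTransGen (RecolStep D k) α β := by
  by_cases hv : α v = β v
  · have heq : α = β := funext fun w => by
      by_cases hw : w = v
      · exact hw ▸ hv
      · exact hαβ hw
    exact heq ▸ .refl
  · exact .single ⟨hα, hβ, v, hv, fun _ hw => hαβ hw⟩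

theorem exists_lift_of_eqOn (hS : S.Finite) (hvS : v ∈ S) (hv : IsPeelable D S k v)
    (hγ : IsDicolouring (inducedOn D S) k γ) (hδ : IsDicolouring (inducedOn D (S \ {v})) k δ)
    (hγδ : EqOn γ δ {u}ᶜ) (hγδv : γ v = δ v) :
    ∃ ε, IsDicolouring (inducedOn D S) k ε ∧ EqOn ε δ {v}ᶜ ∧
      ReflTransGen (RecolStep (inducedOn D S) k) γ ε := by
  classical
  by_cases hδS : IsDicolouring (inducedOn D S) k δ
  · exact ⟨δ, hδS, fun _ _ => rfl, reflTransGen_recolStep_of_eqOn hγ hδS hγδ⟩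
  have hδu : δ u = δ v := by
    by_contra hne
    refine hδS (hδ.of_colourClass_subset hγ fun w hw => ?_)
    rw [hγδ (show w ≠ u from fun hwu => hne (hwu ▸ hw)), hw, hγδv]
  obtain ⟨c, hcv, hcγ⟩ := exists_isFreeColour_ne hS hv hγδ fun hfree =>
    hδS (hδ.of_isFreeColour hfree)
  have hloop : ¬ D v v := fun hvv => hγ.irrefl v ⟨hvv, hvS, hvS⟩
  have hcδ : IsFreeColour D S v δ c := hcγ.mono hloop fun w _ hwc =>
    (hγδ (show w ≠ u from fun hwu => hcv (hwc ▸ hwu ▸ hδu))).trans hwc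
  have hγ' : IsDicolouring (inducedOn D S) k (Function.update γ v c) :=
    (hγ.inducedOn_anti sdiff_subset).update_of_isFreeColour hloop hcγ
  have hδ' : IsDicolouring (inducedOn D S) k (Function.update δ v c) :=
    hδ.update_of_isFreeColour hloop hcδ
  have hstep_v : EqOn γ (Function.update γ v c) {v}ᶜ :=
    fun w hw => (Function.update_of_ne hw c γ).symm
  have hstep_u : EqOn (Function.update γ v c) (Function.update δ v c) {u}ᶜ := fun w hw => by
    simp only [Function.update_apply, hγδ hw]
  exact ⟨Function.update δ v c, hδ', fun w hw => Function.update_of_ne hw c δ,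
    (reflTransGen_recolStep_of_eqOn hγ hγ' hstep_v).trans
      (reflTransGen_recolStep_of_eqOn hγ' hδ' hstep_u)⟩

theorem exists_lift_of_recolStep (hS : S.Finite) (hvS : v ∈ S) (hv : IsPeelable D S k v)
    (hγ : IsDicolouring (inducedOn D S) k γ) (hγα : EqOn γ α {v}ᶜ)
    (hαβ : RecolStep (inducedOn D (S \ {v})) k α β) :
    ∃ ε, IsDicolouring (inducedOn D S) k ε ∧ EqOn ε β {v}ᶜ ∧
      ReflTransGen (RecolStep (inducedOn D S) k) γ ε := by
  classical
  obtain ⟨-, hβ, u, -, hu⟩ := hαβ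
  have hβδ : EqOn β (Function.update β v (γ v)) {v}ᶜ :=
    fun w hw => (Function.update_of_ne hw _ β).symm
  have hγδ : EqOn γ (Function.update β v (γ v)) {u}ᶜ := fun w hwu => by
    by_cases hwv : w = v
    · rw [hwv, Function.update_self]
    · rw [Function.update_of_ne hwv, hγα hwv, hu w hwu]
  obtain ⟨ε, hε, hεδ, hpath⟩ := exists_lift_of_eqOn hS hvS hv hγ
    (hβ.congr_on (hβδ.mono fun _ hw => hw.2)) hγδ (Function.update_self v _ β).symm
  exact ⟨ε, hε, hεδ.trans hβδ.symm, hpath⟩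

theorem exists_lift_of_reflTransGen_s1 (hS : S.Finite) (hvS : v ∈ S) (hv : IsPeelable D S k v)
    (hα : IsDicolouring (inducedOn D S) k α)
    (hαβ : ReflTransGen (RecolStep (inducedOn D (S \ {v})) k) α β) :
    ∃ ε, IsDicolouring (inducedOn D S) k ε ∧ EqOn ε β {v}ᶜ ∧
      ReflTransGen (RecolStep (inducedOn D S) k) α ε := by
  induction hαβ with
  | refl => exact ⟨α, hα, fun _ _ => rfl, .refl⟩
  | tail _ hstep ih =>
    obtain ⟨γ, hγ, hγβ, hαγ⟩ := ih
    obtain ⟨ε, hε, hεβ, hγε⟩ := exists_lift_of_recolStep hS hvS hv hγ hγβ hstep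
    exact ⟨ε, hε, hεβ, hαγ.trans hγε⟩

end Lifting

theorem reflTransGen_recolStep_inducedOn {V : Type} {D : V → V → Prop} {S : Set V} {k : ℕ}
    {α β : V → Fin k} (hS : S.Finite)
    (hpeel : ∀ T ⊆ S, T.Nonempty → ∃ v ∈ T, IsPeelable D T k v)
    (hα : IsDicolouring (inducedOn D S) k α) (hβ : IsDicolouring (inducedOn D S) k β)
    (hαβ : EqOn α β Sᶜ) : ReflTransGen (RecolStep (inducedOn D S) k) α β := by
  classical
  obtain rfl | hne := S.eq_empty_or_nonempty
  · rw [show α = β from funext fun w => hαβ (notMem_empty w)]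
  obtain ⟨v, hvS, hv⟩ := hpeel S subset_rfl hne
  have hββ' : EqOn β (Function.update β v (α v)) {v}ᶜ :=
    fun w hw => (Function.update_of_ne hw _ β).symm
  have hβ' : IsDicolouring (inducedOn D (S \ {v})) k (Function.update β v (α v)) :=
    (hβ.inducedOn_anti sdiff_subset).congr_on (hββ'.mono fun _ hw => hw.2)
  have hαβ' : EqOn α (Function.update β v (α v)) (S \ {v})ᶜ := fun w hw => by
    by_cases hwv : w = v
    · rw [hwv, Function.update_self]
    · rw [Function.update_of_ne hwv, hαβ fun hwS => hw ⟨hwS, hwv⟩]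
  have hpath : ReflTransGen (RecolStep (inducedOn D (S \ {v})) k) α
      (Function.update β v (α v)) :=
    reflTransGen_recolStep_inducedOn (hS.subset sdiff_subset)
      (fun T hT => hpeel T (hT.trans sdiff_subset)) (hα.inducedOn_anti sdiff_subset) hβ' hαβ'
  obtain ⟨ε, hε, hεβ', hαε⟩ := exists_lift_of_reflTransGen_s1 hS hvS hv hα hpath
  exact hαε.trans (reflTransGen_recolStep_of_eqOn hε hβ (hεβ'.trans hββ'.symm))
termination_by S.ncard
decreasing_by exact ncard_sdiff_singleton_lt_of_mem hvS hS

theorem avg_degeneracy_mixing_general {V : Type} [Finite V] (D : V → V → Prop) (k : ℕ)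
    (hpeel : ∀ S : Set V, S.Nonempty → ∃ v ∈ S, IsPeelable D S k v) : Mixing D k := by
  intro α β hα hβ
  rw [← inducedOn_univ (D := D)] at hα hβ ⊢
  exact reflTransGen_recolStep_inducedOn finite_univ (fun T _ => hpeel T) hα hβ (by simp)

/-- Every oriented graph is `k`-mixing for every `k ≥ ⌈δ*_avg⌉ + 1`.  Here
`m` stands for twice the average-degeneracy: every nonempty subdigraph has a
vertex `v` with `d⁺ v + d⁻ v ≤ m`, so that `⌈δ*_avg⌉ = (m + 1) / 2`. -/
theorem avg_degeneracy_mixing {V : Type} [Fintype V] (D : V → V → Prop)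
    (horiented : Oriented D) (m k : ℕ)
    (hm : ∀ S : Set V, S.Nonempty → ∃ v ∈ S, outDegOn D S v + inDegOn D S v ≤ m)
    (hk : (m + 1) / 2 + 1 ≤ k) :
    Mixing D k := by
  refine avg_degeneracy_mixing_general D k fun S hS => ?_
  obtain ⟨v, hvS, hdeg⟩ := hm S hS
  exact ⟨v, hvS, horiented.isPeelable (by omega)⟩
end

section
/- For every positive integer k, there exists a k-out-degenerate oriented graph that is not (k+1)-mixing. -/
/-!
Order the vertices and partition them into classes; direct arcs upwards inside a class and
downwards between different classes. If colours are pairwise distinct inside each class, then every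
monochromatic arc goes down, so the colouring is a dicolouring, and the least vertex of any set
sends arcs only to vertices of its own class, whose colours differ from its own and from each other.

Take the vertices `0, …, p * q - 1` with `p < q` coprime, the residues mod `q` as classes and the
residues mod `p` as colours. Given a vertex `v` and another colour `c`, the Chinese remainder
theorem finds a vertex `x` of colour `c` in the class of `v`. Moving from `x` towards `v` by `p < q`
gives a vertex `y` of colour `c` between them and in another class, so `v`, `x`, `y` span a directed
triangle, and `v` cannot be recoloured with `c`. Hence the colouring is isolated in the dicolouring
graph, whereas permuting its colours yields other dicolourings.
-/

section Dicolouring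

variable {V : Type} {D : V → V → Prop} {k : ℕ} {α : V → Fin k}

theorem relAcyclic_of_forall_lt [Preorder V] (h : ∀ u v, D u v → v < u) : RelAcyclic D := by
  intro v hv
  have hlt : Relation.TransGen (· > ·) v v := Relation.TransGen.mono h _ _ hv
  rw [Relation.transGen_eq_self] at hlt
  exact lt_irrefl v hlt

theorem IsDicolouring.comp_injective {l : ℕ} (hα : IsDicolouring D k α) {f : Fin k → Fin l}
    (hf : Function.Injective f) : IsDicolouring D l (f ∘ α) := by
  intro c v hv
  obtain ⟨_, ⟨_, rfl, _⟩, _⟩ := Relation.TransGen.head'_iff.1 hv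
  exact hα (α v) v (Relation.TransGen.mono (fun _ _ ⟨huw, hu, hw⟩ ↦ ⟨huw, hf hu, hf hw⟩) _ _ hv)

theorem IsDicolouring.not_arc_of_monochromatic_path (hα : IsDicolouring D k α) {u v w : V}
    (huv : D u v) (hvw : D v w) (hu : α u = α v) (hw : α w = α v) : ¬ D w u := fun hwu ↦
  hα (α v) u (((Relation.TransGen.single ⟨huv, hu, rfl⟩).tail ⟨hvw, rfl, hw⟩).tail ⟨hwu, hw, hu⟩)

variable [DecidableEq V]

theorem IsDicolouring.frozen_of_forall_exists_triangle (hα : IsDicolouring D k α)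
    (h : ∀ v c, c ≠ α v → ∃ x y, α x = c ∧ α y = c ∧ D v x ∧ D x y ∧ D y v) :
    FrozenDicolouring D k α := by
  refine ⟨hα, fun v c hc hβ ↦ ?_⟩
  obtain ⟨x, y, hx, hy, hvx, hxy, hyv⟩ := h v c hc
  have update_eq {z : V} (hz : α z = c) : Function.update α v c z = c := by
    rw [Function.update_of_ne (by rintro rfl; exact hc hz.symm), hz]
  refine hβ.not_arc_of_monochromatic_path hvx hxy ?_ ?_ hyv
  · rw [Function.update_self, update_eq hx]
  · rw [update_eq hy, update_eq hx]

theorem FrozenDicolouring.not_recolStep (hα : FrozenDicolouring D k α) (β : V → Fin k) :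
    ¬ RecolStep D k α β := by
  rintro ⟨-, hβ, v, hv, hne⟩
  have hupdate : Function.update α v (β v) = β := Function.update_eq_iff.2 ⟨rfl, hne⟩
  exact hα.2 v (β v) hv.symm (by rwa [hupdate])

theorem FrozenDicolouring.not_mixing [Nonempty V] [Nontrivial (Fin k)]
    (hα : FrozenDicolouring D k α) : ¬ Mixing D k := by
  intro hmix
  obtain ⟨v⟩ := ‹Nonempty V›
  obtain ⟨c, hc⟩ := exists_ne (α v)
  have hβ : IsDicolouring D k (Equiv.swap (α v) c ∘ α) :=
    hα.1.comp_injective (Equiv.swap (α v) c).injective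
  rcases (hmix _ _ hα.1 hβ).cases_head with heq | ⟨γ, hstep, -⟩
  · exact hc (by simpa using (congrFun heq v).symm)
  · exact hα.not_recolStep γ hstep

end Dicolouring

/-- The digraph on an ordered vertex set whose arcs go upwards inside each fibre of `ρ` and
downwards between different fibres; it is a tournament when the order is linear. -/
def fibreTournament {V ι : Type*} [LT V] (ρ : V → ι) (u v : V) : Prop :=
  (u < v ∧ ρ u = ρ v) ∨ (v < u ∧ ρ u ≠ ρ v)

section FibreTournament

variable {V : Type} {ι : Type*} {ρ : V → ι}

theorem oriented_fibreTournament [Preorder V] : Oriented (fibreTournament ρ) := by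
  rintro u v (⟨huv, hρ⟩ | ⟨hvu, hρ⟩) (⟨hvu', hρ'⟩ | ⟨huv', hρ'⟩)
  · exact lt_asymm huv hvu'
  · exact hρ' hρ.symm
  · exact hρ hρ'.symm
  · exact lt_asymm hvu huv'

theorem fibreTournament_triangle [Preorder V] {u y w : V} (huy : u < y) (hyw : y < w)
    (huw : ρ u = ρ w) (hy : ρ y ≠ ρ u) :
    fibreTournament ρ u w ∧ fibreTournament ρ w y ∧ fibreTournament ρ y u :=
  ⟨.inl ⟨huy.trans hyw, huw⟩, .inr ⟨hyw, huw ▸ hy.symm⟩, .inr ⟨huy, hy⟩⟩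

variable {k : ℕ}

theorem isDicolouring_fibreTournament [Preorder V] {α : V → Fin k}
    (h : Function.Injective fun v ↦ (α v, ρ v)) : IsDicolouring (fibreTournament ρ) k α := by
  refine fun c ↦ relAcyclic_of_forall_lt ?_
  rintro u v ⟨⟨huv, hρ⟩ | ⟨hvu, -⟩, hu, hv⟩
  · exact absurd (h (Prod.ext (hu.trans hv.symm) hρ)) huv.ne
  · exact hvu

theorem exists_outDegOn_fibreTournament_le [Preorder V] [Finite V] {α : V → Fin (k + 1)}
    (h : Function.Injective fun v ↦ (α v, ρ v)) {S : Set V} (hS : S.Nonempty) :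
    ∃ v ∈ S, outDegOn (fibreTournament ρ) S v ≤ k := by
  obtain ⟨v, hv, hmin⟩ := S.toFinite.exists_minimal hS
  have hout : ∀ w ∈ {w ∈ S | fibreTournament ρ v w}, v < w ∧ ρ v = ρ w := by
    rintro w ⟨hw, hvw | ⟨hwv, -⟩⟩
    · exact hvw
    · exact absurd (hmin hw hwv.le) hwv.not_ge
  refine ⟨v, hv, ?_⟩
  calc outDegOn (fibreTournament ρ) S v
      ≤ ({α v}ᶜ : Set (Fin (k + 1))).ncard := by
        refine Set.ncard_le_ncard_of_injOn α (fun w hw hα ↦ ?_) (fun w hw z hz hα ↦ ?_)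
        · exact (hout w hw).1.ne' (h (Prod.ext hα (hout w hw).2.symm))
        · exact h (Prod.ext hα ((hout w hw).2.symm.trans (hout z hz).2))
    _ = k := by
        rw [Set.ncard_compl, Nat.card_fin, Set.ncard_singleton, Nat.add_sub_cancel]

end FibreTournament

section Residues

variable {p q : ℕ} [NeZero p]

theorem injective_residues (hpq : p.Coprime q) :
    Function.Injective fun u : Fin (p * q) ↦ (Fin.ofNat p u, (u : ℕ) % q) := by
  intro u v huv
  obtain ⟨hp, hq⟩ := Prod.mk.inj huv
  have hmod : u ≡ v [MOD p * q] :=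
    (Nat.modEq_and_modEq_iff_modEq_mul hpq).1 ⟨congrArg Fin.val hp, hq⟩
  exact Fin.ext (hmod.eq_of_lt_of_lt u.2 v.2)

theorem exists_residues_eq [NeZero q] (hpq : p.Coprime q) (c : Fin p) (r : ℕ) :
    ∃ x : Fin (p * q), Fin.ofNat p x = c ∧ (x : ℕ) % q = r % q := by
  obtain ⟨hc, hr⟩ := (Nat.chineseRemainder hpq c r).2
  have hlt := Nat.chineseRemainder_lt_mul hpq c r (NeZero.ne p) (NeZero.ne q)
  exact ⟨⟨_, hlt⟩, Fin.ext (Nat.mod_eq_of_modEq hc c.2), hr⟩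

theorem not_modEq_add_of_lt (hpq : p < q) (u : ℕ) : ¬ u ≡ u + p [MOD q] := fun h ↦ by
  have := h.add_le_of_lt (Nat.lt_add_of_pos_right (NeZero.pos p))
  omega

theorem exists_between_residues (hpq : p < q) {n : ℕ} {v x : Fin n} (hne : v ≠ x)
    (h : (v : ℕ) % q = x % q) :
    ∃ y : Fin n, (v < y ∧ y < x ∨ x < y ∧ y < v) ∧
      Fin.ofNat p y = Fin.ofNat p x ∧ (y : ℕ) % q ≠ x % q := by
  have hp : 0 < p := NeZero.pos p
  rcases hne.lt_or_gt with hvx | hxv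
  · have hfar : (v : ℕ) + q ≤ x := Nat.ModEq.add_le_of_lt h hvx
    obtain ⟨y, hy⟩ := Nat.exists_eq_add_of_le' (show p ≤ (x : ℕ) by omega)
    have hvy : (v : ℕ) < y := by omega
    have hyx : y < (x : ℕ) := by omega
    refine ⟨⟨y, by omega⟩, .inl ⟨hvy, hyx⟩, Fin.ext ?_, ?_⟩
    · simp [hy]
    · exact hy ▸ not_modEq_add_of_lt hpq y
  · have hfar : (x : ℕ) + q ≤ v := Nat.ModEq.add_le_of_lt h.symm hxv
    have hxy : (x : ℕ) < x + p := by omega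
    have hyv : x + p < (v : ℕ) := by omega
    refine ⟨⟨x + p, by omega⟩, .inr ⟨hxy, hyv⟩, Fin.ext ?_, ?_⟩
    · simp
    · exact fun hmod ↦ not_modEq_add_of_lt hpq x hmod.symm

theorem frozenDicolouring_residues (hpq : p.Coprime q) (hlt : p < q) :
    FrozenDicolouring (fibreTournament fun u : Fin (p * q) ↦ (u : ℕ) % q) p
      fun u ↦ Fin.ofNat p u := by
  refine (isDicolouring_fibreTournament (injective_residues hpq)).frozen_of_forall_exists_triangle
    fun v c hc ↦ ?_
  have : NeZero q := .of_gt hlt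
  obtain ⟨x, rfl, hx⟩ := exists_residues_eq hpq c v
  have hne : v ≠ x := by
    rintro rfl
    exact hc rfl
  obtain ⟨y, ⟨hvy, hyx⟩ | ⟨hxy, hyv⟩, hyc, hyq⟩ := exists_between_residues hlt hne hx.symm
  · exact ⟨x, y, rfl, hyc, fibreTournament_triangle hvy hyx hx.symm (hx ▸ hyq)⟩
  · obtain ⟨hxv, hvy, hyx⟩ :=
      fibreTournament_triangle (ρ := fun u : Fin (p * q) ↦ (u : ℕ) % q) hxy hyv hx hyq
    exact ⟨y, x, hyc, rfl, hvy, hyx, hxv⟩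

end Residues

/-- For every positive integer `k`, there exists a `k`-out-degenerate oriented
graph that is not `(k+1)`-mixing. -/
theorem exists_out_degenerate_not_mixing (k : ℕ) (hk : 1 ≤ k) :
    ∃ (n : ℕ) (D : Fin n → Fin n → Prop),
      Oriented D ∧
      (∀ S : Set (Fin n), S.Nonempty → ∃ v ∈ S, outDegOn D S v ≤ k) ∧
      ¬ Mixing D (k + 1) := by
  have hcoprime : (k + 1).Coprime (k + 2) := Nat.coprime_self_add_right.2 (Nat.coprime_one_right _)
  have : Nontrivial (Fin (k + 1)) := Fin.nontrivial_iff_two_le.2 (by omega)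
  have : Nonempty (Fin ((k + 1) * (k + 2))) := ⟨⟨0, by positivity⟩⟩
  exact ⟨(k + 1) * (k + 2), fibreTournament fun u ↦ (u : ℕ) % (k + 2),
    oriented_fibreTournament,
    fun _ ↦ exists_outDegOn_fibreTournament_le (injective_residues hcoprime),
    (frozenDicolouring_residues hcoprime (Nat.lt_succ_self _)).not_mixing⟩
end
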